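/- Let g, c, φ, ψ : [0,a] → ℝ be continuously differentiable with g(u) > 0, c(u) > 0, φ'(u) > 0, η(u) := φ(u) − ψ(u) ∈ (−π/2, π/2), and c'(u)·cos η(u) = c(u)·φ'(u)·sin η(u) for all u; let f, z : [0,b] → ℝ be continuously differentiable with z'(v) > 0 for all v. Fix t ∈ ℝ with c(u)² + t > 0 and c(u)²cos²η(u) + t > 0 for all u, and z'(v)² − t·f'(v)² ≥ 0 for all v. Define φᵗ(u) = φ(0) + ∫₀ᵘ φ'(w)c(w)·√( c(w)² + t/cos²η(w) ) / (c(w)² + t) dw, ηᵗ(u) = arctan( c(u)·sin η(u) / √( c(u)²cos²η(u) + t ) ), ψᵗ = φᵗ − ηᵗ, γᵗ(u) = ∫₀ᵘ g(w)·(−sin ψᵗ(w), cos ψᵗ(w)) dw, ξᵗ(u) = √(c(u)²+t)·(cos φᵗ(u), sin φᵗ(u)), zᵗ(v) = z(0) + ∫₀ᵛ √( z'(w)² − t f'(w)² ) dw, and σᵗ(u,v) = ( γᵗ(u) + f(v)·ξᵗ(u), zᵗ(v) ) ∈ ℝ³. Then the first fundamental form of σᵗ is independent of t: for all (u,v), ‖σᵗ_u(u,v)‖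 = ‖σ⁰_u(u,v)‖, ⟪σᵗ_u(u,v), σᵗ_v(u,v)⟫ = ⟪σ⁰_u(u,v), σ⁰_v(u,v)⟫, and ‖σᵗ_v(u,v)‖ = ‖σ⁰_v(u,v)‖; moreover σ⁰ coincides with the T-surface (u,v) ↦ (γ(u) − γ(0) + f(v)ξ(u), z(v)), where γ'(u) = g(u)(−sin ψ(u), cos ψ(u)) and ξ(u) = c(u)(cos φ(u), sin φ(u)). Hence σᵗ is an isometric deformation of this T-surface within the class of T-surfaces. -/

import Mathlib

open Real Set

/-- A vector in Euclidean space `ℝ³` given by its three coordinates. -/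
noncomputable def e3 (x y z : ℝ) : EuclideanSpace ℝ (Fin 3) := !₂[x, y, z]

lemma ftc_aux {F : ℝ → ℝ} {a u : ℝ} (hF : ContinuousOn F (Icc 0 a)) (hu : u ∈ Icc 0 a) :
    HasDerivWithinAt (fun x => ∫ w in (0:ℝ)..x, F w) (F u) (Icc 0 a) u := by
  have : Fact (u ∈ Icc 0 a) := ⟨hu⟩
  refine intervalIntegral.integral_hasDerivWithinAt_right ?_ ?_ (hF u hu)
  · apply ContinuousOn.intervalIntegrable
    rw [uIcc_of_le hu.1]
    exact hF.mono (Icc_subset_Icc le_rfl hu.2)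
  · exact hF.stronglyMeasurableAtFilter_nhdsWithin measurableSet_Icc u

lemma ftc2_aux {F F' : ℝ → ℝ} {a u : ℝ}
    (hd : ∀ x ∈ Icc 0 a, HasDerivWithinAt F (F' x) (Icc 0 a) x)
    (hF : ContinuousOn F' (Icc 0 a)) (hu : u ∈ Icc 0 a) :
    ∫ w in (0:ℝ)..u, F' w = F u - F 0 := by
  have hsub : Icc 0 u ⊆ Icc 0 a := Icc_subset_Icc le_rfl hu.2
  apply intervalIntegral.integral_eq_sub_of_hasDerivAt_of_le hu.1
  · exact fun x hx => ((hd x (hsub hx)).continuousWithinAt).mono hsub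
  · intro x hx
    exact (hd x (hsub (Ioo_subset_Icc_self hx))).hasDerivAt
      (Icc_mem_nhds hx.1 (hx.2.trans_le hu.2))
  · apply ContinuousOn.intervalIntegrable
    rw [uIcc_of_le hu.1]
    exact hF.mono hsub

lemma e3_deriv {x y z : ℝ → ℝ} {x' y' z' u : ℝ} {s : Set ℝ}
    (hx : HasDerivWithinAt x x' s u) (hy : HasDerivWithinAt y y' s u)
    (hz : HasDerivWithinAt z z' s u) :
    HasDerivWithinAt (fun w => e3 (x w) (y w) (z w)) (e3 x' y' z') s u := by
  have h : HasDerivWithinAt (fun w => ![x w, y w, z w]) ![x', y', z'] s u := by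
    rw [hasDerivWithinAt_pi]
    intro i
    fin_cases i
    · exact hx
    · exact hy
    · exact hz
  exact ((EuclideanSpace.equiv (Fin 3) ℝ).symm : (Fin 3 → ℝ) →L[ℝ]
    EuclideanSpace ℝ (Fin 3)).hasFDerivAt.comp_hasDerivWithinAt u h

lemma e3_inner (x y z x' y' z' : ℝ) :
    (inner ℝ (e3 x y z) (e3 x' y' z') : ℝ) = x * x' + y * y' + z * z' := by
  simp [e3, PiLp.inner_apply, Fin.sum_univ_three]
  ring

lemma e3_norm (x y z : ℝ) : ‖e3 x y z‖ = Real.sqrt (x ^ 2 + y ^ 2 + z ^ 2) := by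
  simp [e3, EuclideanSpace.norm_eq, Fin.sum_univ_three]

lemma arctan_trig {p q r : ℝ} (hq : 0 < q) (hr : 0 < r) (h : p ^ 2 + q ^ 2 = r ^ 2) :
    sin (arctan (p / q)) = p / r ∧ cos (arctan (p / q)) = q / r := by
  have h1 : Real.sqrt (1 + (p / q) ^ 2) = r / q := by
    rw [show 1 + (p / q) ^ 2 = (r / q) ^ 2 by field_simp; linarith]
    exact Real.sqrt_sq (by positivity)
  rw [sin_arctan, cos_arctan, h1]
  constructor <;> field_simp

/-- The first fundamental form of the surface for a single parameter value. -/
lemma fff_aux (a b : ℝ)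
    (g c φ ψ c' φ' f f' z' : ℝ → ℝ)
    (hg : ContinuousOn g (Icc 0 a))
    (hcd : ∀ u ∈ Icc 0 a, HasDerivWithinAt c (c' u) (Icc 0 a) u)
    (hφ : ContinuousOn φ (Icc 0 a)) (hψ : ContinuousOn ψ (Icc 0 a))
    (hφ' : ContinuousOn φ' (Icc 0 a))
    (hηr : ∀ u ∈ Icc 0 a, φ u - ψ u ∈ Set.Ioo (-(π / 2)) (π / 2))
    (hconj : ∀ u ∈ Icc 0 a, c' u * cos (φ u - ψ u) = c u * φ' u * sin (φ u - ψ u))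
    (hfd : ∀ v ∈ Icc 0 b, HasDerivWithinAt f (f' v) (Icc 0 b) v)
    (hf' : ContinuousOn f' (Icc 0 b)) (hz' : ContinuousOn z' (Icc 0 b))
    (s φ0 z0 : ℝ)
    (htc : ∀ u ∈ Icc 0 a, 0 < c u ^ 2 + s ∧ 0 < c u ^ 2 * cos (φ u - ψ u) ^ 2 + s)
    (htz : ∀ v ∈ Icc 0 b, 0 ≤ z' v ^ 2 - s * f' v ^ 2)
    (φt ηt ψt zt : ℝ → ℝ)
    (hφt : ∀ u, φt u = φ0 + ∫ w in (0:ℝ)..u,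
        (φ' w * c w * Real.sqrt (c w ^ 2 + s / cos (φ w - ψ w) ^ 2)) / (c w ^ 2 + s))
    (hηt : ∀ u, ηt u = arctan
        (c u * sin (φ u - ψ u) / Real.sqrt (c u ^ 2 * cos (φ u - ψ u) ^ 2 + s)))
    (hψt : ∀ u, ψt u = φt u - ηt u)
    (hzt : ∀ v, zt v = z0 + ∫ w in (0:ℝ)..v, Real.sqrt (z' w ^ 2 - s * f' w ^ 2))
    (σ : ℝ → ℝ → EuclideanSpace ℝ (Fin 3))
    (hσ : ∀ u v, σ u v =
      e3 ((∫ w in (0:ℝ)..u, -(g w * sin (ψt w))) +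
            f v * Real.sqrt (c u ^ 2 + s) * cos (φt u))
         ((∫ w in (0:ℝ)..u, g w * cos (ψt w)) +
            f v * Real.sqrt (c u ^ 2 + s) * sin (φt u))
         (zt v)) (u : ℝ) (hu : u ∈ Icc 0 a) (v : ℝ) (hv : v ∈ Icc 0 b) :
    ∃ su sv : EuclideanSpace ℝ (Fin 3),
        HasDerivWithinAt (fun u' => σ u' v) su (Icc 0 a) u ∧
        HasDerivWithinAt (fun v' => σ u v') sv (Icc 0 b) v ∧
        ‖su‖ = Real.sqrt (g u ^ 2 + 2 * g u * f v * (φ' u * c u / cos (φ u - ψ u))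
          + f v ^ 2 * (φ' u * c u / cos (φ u - ψ u)) ^ 2) ∧
        (inner ℝ su sv : ℝ) = f' v * (g u * c u * sin (φ u - ψ u) + f v * c u * c' u) ∧
        ‖sv‖ = Real.sqrt (f' v ^ 2 * c u ^ 2 + z' v ^ 2) := by
  have hcos : ∀ u ∈ Icc 0 a, 0 < cos (φ u - ψ u) := fun u hu => cos_pos_of_mem_Ioo (hηr u hu)
  have hc : ContinuousOn c (Icc 0 a) := fun x hx => (hcd x hx).continuousWithinAt
  have hccos : ContinuousOn (fun u => cos (φ u - ψ u)) (Icc 0 a) :=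
    continuous_cos.comp_continuousOn (hφ.sub hψ)
  have hcsin : ContinuousOn (fun u => sin (φ u - ψ u)) (Icc 0 a) :=
    continuous_sin.comp_continuousOn (hφ.sub hψ)
  have hΦc : ContinuousOn (fun w => (φ' w * c w *
      Real.sqrt (c w ^ 2 + s / cos (φ w - ψ w) ^ 2)) / (c w ^ 2 + s)) (Icc 0 a) := by
    refine ((hφ'.mul hc).mul (Real.continuous_sqrt.comp_continuousOn
      ((hc.pow 2).add (continuousOn_const.div (hccos.pow 2) ?_)))).div
      ((hc.pow 2).add continuousOn_const) ?_
    · exact fun x hx => (pow_pos (hcos x hx) 2).ne'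
    · exact fun x hx => (htc x hx).1.ne'
  have hφtd : ∀ u ∈ Icc 0 a, HasDerivWithinAt φt ((φ' u * c u *
      Real.sqrt (c u ^ 2 + s / cos (φ u - ψ u) ^ 2)) / (c u ^ 2 + s)) (Icc 0 a) u := by
    intro u hu
    rw [funext hφt]
    exact (ftc_aux hΦc hu).const_add _
  have hφtc : ContinuousOn φt (Icc 0 a) := fun x hx => (hφtd x hx).continuousWithinAt
  have hηtc : ContinuousOn ηt (Icc 0 a) := by
    rw [funext hηt]
    refine continuous_arctan.comp_continuousOn ((hc.mul hcsin).div
      (Real.continuous_sqrt.comp_continuousOn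
        (((hc.pow 2).mul (hccos.pow 2)).add continuousOn_const)) ?_)
    exact fun x hx => (Real.sqrt_pos.2 (htc x hx).2).ne'
  have hψtc : ContinuousOn ψt (Icc 0 a) := by
    rw [funext hψt]; exact hφtc.sub hηtc
  have hI1 := ftc_aux (F := fun w => -(g w * sin (ψt w)))
    (hg.mul (continuous_sin.comp_continuousOn hψtc)).neg hu
  have hI2 := ftc_aux (F := fun w => g w * cos (ψt w))
    (hg.mul (continuous_cos.comp_continuousOn hψtc)) hu
  have hztd : HasDerivWithinAt zt (Real.sqrt (z' v ^ 2 - s * f' v ^ 2)) (Icc 0 b) v := by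
    rw [funext hzt]
    exact (ftc_aux (F := fun w => Real.sqrt (z' w ^ 2 - s * f' w ^ 2))
      (Real.continuous_sqrt.comp_continuousOn
        ((hz'.pow 2).sub (continuousOn_const.mul (hf'.pow 2)))) hv).const_add _
  obtain ⟨hp, hq⟩ := htc u hu
  have hR : HasDerivWithinAt (fun u => Real.sqrt (c u ^ 2 + s))
      (c u * c' u / Real.sqrt (c u ^ 2 + s)) (Icc 0 a) u := by
    have := (((hcd u hu).pow 2).add_const s).sqrt hp.ne'
    convert this using 1
    simp only [Pi.pow_apply]
    rw [← mul_div_mul_left _ _ (two_ne_zero' ℝ)]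
    congr 1
    push_cast
    ring
  have hC := hcos u hu
  have hcj := hconj u hu
  have hQ : Real.sqrt (c u ^ 2 + s / cos (φ u - ψ u) ^ 2)
      = Real.sqrt (c u ^ 2 * cos (φ u - ψ u) ^ 2 + s) / cos (φ u - ψ u) := by
    rw [show c u ^ 2 + s / cos (φ u - ψ u) ^ 2
      = (c u ^ 2 * cos (φ u - ψ u) ^ 2 + s) / cos (φ u - ψ u) ^ 2 by field_simp,
      Real.sqrt_div hq.le, Real.sqrt_sq hC.le]
  have hΦ := hφtd u hu
  rw [hQ] at hΦ
  have hR0 := Real.sqrt_pos.2 hp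
  have hQ0 := Real.sqrt_pos.2 hq
  have hR2 := Real.sq_sqrt hp.le
  have hQ2 := Real.sq_sqrt hq.le
  have hSC := sin_sq_add_cos_sq (φ u - ψ u)
  have hS2 := sin_sq_add_cos_sq (φt u)
  obtain ⟨hsη, hcη⟩ := arctan_trig (p := c u * sin (φ u - ψ u)) hQ0 hR0 (by
    rw [hR2, hQ2]; linear_combination c u ^ 2 * hSC)
  rw [← hηt] at hsη hcη
  have hsψ : sin (ψt u) = sin (φt u) * cos (ηt u) - cos (φt u) * sin (ηt u) := by
    rw [hψt, sin_sub]
  have hcψ : cos (ψt u) = cos (φt u) * cos (ηt u) + sin (φt u) * sin (ηt u) := by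
    rw [hψt, cos_sub]
  have hZ2 := Real.sq_sqrt (htz v hv)
  have hc'e : c' u = c u * φ' u * sin (φ u - ψ u) / cos (φ u - ψ u) := by
    rw [eq_div_iff hC.ne', hcj]
  have hrr : ∀ x : ℝ, x / (c u ^ 2 + s) = x / Real.sqrt (c u ^ 2 + s) ^ 2 := by
    intro x; rw [hR2]
  rw [hrr] at hΦ
  simp only [hσ]
  refine ⟨_, _, e3_deriv (hI1.add ((hR.const_mul (f v)).mul hΦ.cos))
    (hI2.add ((hR.const_mul (f v)).mul hΦ.sin)) (hasDerivWithinAt_const _ _ _),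
    e3_deriv ((((hfd v hv).mul_const _).mul_const _).const_add _)
    ((((hfd v hv).mul_const _).mul_const _).const_add _) hztd, ?_, ?_, ?_⟩
  all_goals simp only [e3_norm, e3_inner, hsψ, hcψ, hsη, hcη, hc'e]
  all_goals
    generalize Real.sqrt (c u ^ 2 + s) = R at *
    generalize Real.sqrt (c u ^ 2 * cos (φ u - ψ u) ^ 2 + s) = Q at *
    generalize cos (φ u - ψ u) = C at *
    generalize sin (φ u - ψ u) = S at *
    generalize cos (φt u) = x at *
    generalize sin (φt u) = y at *
  · congr 1
    have hRQ : R ^ 2 = c u ^ 2 * S ^ 2 + Q ^ 2 := by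
      rw [hR2, hQ2]; linear_combination -c u ^ 2 * hSC
    have key1 : ∀ A B D E : ℝ, (-(g u * (y * A - x * B)) + (f v * D * x + f v * R * (-y * E))) ^ 2
        + (g u * (x * A + y * B) + (f v * D * y + f v * R * (x * E))) ^ 2
        = (y ^ 2 + x ^ 2) * (g u ^ 2 * (A ^ 2 + B ^ 2) + 2 * g u * f v * (D * B + R * E * A)
          + f v ^ 2 * (D ^ 2 + R ^ 2 * E ^ 2)) := by intros; ring
    rw [key1, hS2]
    have e1 : (Q / R) ^ 2 + (c u * S / R) ^ 2 = 1 := by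
      field_simp; linarith
    have e2 : c u * (c u * φ' u * S / C) / R * (c u * S / R)
        + R * (φ' u * c u * (Q / C) / R ^ 2) * (Q / R) = φ' u * c u / C := by
      field_simp; rw [hRQ]
    have e3 : (c u * (c u * φ' u * S / C) / R) ^ 2
        + R ^ 2 * (φ' u * c u * (Q / C) / R ^ 2) ^ 2 = (φ' u * c u / C) ^ 2 := by
      field_simp; rw [hRQ]
    rw [e1, e2, e3]; ring
  · have key : ∀ A B D E : ℝ,
        (-(g u * (y * A - x * B)) + (f v * D * x + f v * R * (-y * E))) * (f' v * R * x)
        + (g u * (x * A + y * B) + (f v * D * y + f v * R * (x * E))) * (f' v * R * y)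
        = (y ^ 2 + x ^ 2) * (f' v * (g u * (R * B) + f v * (R * D))) := by intros; ring
    rw [key, hS2]
    field_simp
    ring
  · congr 1
    rw [hZ2]
    linear_combination f' v ^ 2 * R ^ 2 * hS2 + f' v ^ 2 * hR2

/-- **Theorem 5.8.** The explicit isometric deformation of a general T-surface
`σ(u,v) = (γ(u) + f(v)ξ(u), z(v))` with `γ' = g(−sin ψ, cos ψ)`,
`ξ = c(cos φ, sin φ)` and conjugacy condition `c' cos η = c φ' sin η`, `η = φ − ψ`:
the first fundamental form of the deformed surface `σᵗ` coincides with that of `σ⁰`, and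
`σ⁰` is the original T-surface (with `γ` normalized by `γ(0) = 0`). -/
theorem stmt_17 (a b : ℝ)
    (g c φ ψ g' c' φ' ψ' f z f' z' : ℝ → ℝ)
    (hgd : ∀ u ∈ Icc 0 a, HasDerivWithinAt g (g' u) (Icc 0 a) u)
    (hcd : ∀ u ∈ Icc 0 a, HasDerivWithinAt c (c' u) (Icc 0 a) u)
    (hφd : ∀ u ∈ Icc 0 a, HasDerivWithinAt φ (φ' u) (Icc 0 a) u)
    (hψd : ∀ u ∈ Icc 0 a, HasDerivWithinAt ψ (ψ' u) (Icc 0 a) u)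
    (hg' : ContinuousOn g' (Icc 0 a)) (hc' : ContinuousOn c' (Icc 0 a))
    (hφ' : ContinuousOn φ' (Icc 0 a)) (hψ' : ContinuousOn ψ' (Icc 0 a))
    (hgpos : ∀ u ∈ Icc 0 a, 0 < g u) (hcpos : ∀ u ∈ Icc 0 a, 0 < c u)
    (hφ'pos : ∀ u ∈ Icc 0 a, 0 < φ' u)
    (hηr : ∀ u ∈ Icc 0 a, φ u - ψ u ∈ Set.Ioo (-(π / 2)) (π / 2))
    (hconj : ∀ u ∈ Icc 0 a, c' u * cos (φ u - ψ u) = c u * φ' u * sin (φ u - ψ u))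
    (hfd : ∀ v ∈ Icc 0 b, HasDerivWithinAt f (f' v) (Icc 0 b) v)
    (hzd : ∀ v ∈ Icc 0 b, HasDerivWithinAt z (z' v) (Icc 0 b) v)
    (hf' : ContinuousOn f' (Icc 0 b)) (hz' : ContinuousOn z' (Icc 0 b))
    (hz'pos : ∀ v ∈ Icc 0 b, 0 < z' v)
    (t : ℝ)
    (htc : ∀ u ∈ Icc 0 a, 0 < c u ^ 2 + t ∧ 0 < c u ^ 2 * cos (φ u - ψ u) ^ 2 + t)
    (htz : ∀ v ∈ Icc 0 b, 0 ≤ z' v ^ 2 - t * f' v ^ 2)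
    (φt ηt ψt : ℝ → ℝ → ℝ) (zt : ℝ → ℝ → ℝ)
    (hφt : ∀ s u, φt s u = φ 0 + ∫ w in (0:ℝ)..u,
        (φ' w * c w * Real.sqrt (c w ^ 2 + s / cos (φ w - ψ w) ^ 2)) / (c w ^ 2 + s))
    (hηt : ∀ s u, ηt s u = arctan
        (c u * sin (φ u - ψ u) / Real.sqrt (c u ^ 2 * cos (φ u - ψ u) ^ 2 + s)))
    (hψt : ∀ s u, ψt s u = φt s u - ηt s u)
    (hzt : ∀ s v, zt s v = z 0 + ∫ w in (0:ℝ)..v, Real.sqrt (z' w ^ 2 - s * f' w ^ 2))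
    (σ : ℝ → ℝ → ℝ → EuclideanSpace ℝ (Fin 3))
    (hσ : ∀ s u v, σ s u v =
      e3 ((∫ w in (0:ℝ)..u, -(g w * sin (ψt s w))) +
            f v * Real.sqrt (c u ^ 2 + s) * cos (φt s u))
         ((∫ w in (0:ℝ)..u, g w * cos (ψt s w)) +
            f v * Real.sqrt (c u ^ 2 + s) * sin (φt s u))
         (zt s v)) :
    ∀ u ∈ Icc 0 a, ∀ v ∈ Icc 0 b,
      -- the first fundamental form of σᵗ coincides with that of σ⁰
      (∃ su sv su0 sv0 : EuclideanSpace ℝ (Fin 3),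
        HasDerivWithinAt (fun u' => σ t u' v) su (Icc 0 a) u ∧
        HasDerivWithinAt (fun v' => σ t u v') sv (Icc 0 b) v ∧
        HasDerivWithinAt (fun u' => σ 0 u' v) su0 (Icc 0 a) u ∧
        HasDerivWithinAt (fun v' => σ 0 u v') sv0 (Icc 0 b) v ∧
        ‖su‖ = ‖su0‖ ∧ (inner ℝ su sv : ℝ) = inner ℝ su0 sv0 ∧ ‖sv‖ = ‖sv0‖) ∧
      -- σ⁰ is the original T-surface (γ(u) − γ(0) + f(v)ξ(u), z(v))
      σ 0 u v =
        e3 ((∫ w in (0:ℝ)..u, -(g w * sin (ψ w))) + f v * c u * cos (φ u))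
           ((∫ w in (0:ℝ)..u, g w * cos (ψ w)) + f v * c u * sin (φ u))
           (z v) := by
  have hg : ContinuousOn g (Icc 0 a) := fun x hx => (hgd x hx).continuousWithinAt
  have hφ : ContinuousOn φ (Icc 0 a) := fun x hx => (hφd x hx).continuousWithinAt
  have hψ : ContinuousOn ψ (Icc 0 a) := fun x hx => (hψd x hx).continuousWithinAt
  have hcos : ∀ u ∈ Icc 0 a, 0 < cos (φ u - ψ u) := fun u hu => cos_pos_of_mem_Ioo (hηr u hu)
  intro u hu v hv
  constructor
  · obtain ⟨su, sv, h1, h2, h3, h4, h5⟩ := fff_aux a b g c φ ψ c' φ' f f' z' hg hcd hφ hψ hφ' hηr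
      hconj hfd hf' hz' t _ _ htc htz (φt t) (ηt t) (ψt t) (zt t) (hφt t) (hηt t) (hψt t) (hzt t)
      (σ t) (hσ t) u hu v hv
    obtain ⟨su0, sv0, k1, k2, k3, k4, k5⟩ := fff_aux a b g c φ ψ c' φ' f f' z' hg hcd hφ hψ hφ' hηr
      hconj hfd hf' hz' 0 _ _
      (fun u hu => ⟨by have := hcpos u hu; positivity,
        by have := hcpos u hu; have := hcos u hu; positivity⟩)
      (fun v hv => by rw [zero_mul, sub_zero]; positivity)
      (φt 0) (ηt 0) (ψt 0) (zt 0) (hφt 0) (hηt 0) (hψt 0) (hzt 0)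
      (σ 0) (hσ 0) u hu v hv
    exact ⟨su, sv, su0, sv0, h1, h2, k1, k2, h3.trans k3.symm, h4.trans k4.symm, h5.trans k5.symm⟩
  · have hφ0 : ∀ x ∈ Icc 0 a, φt 0 x = φ x := by
      intro x hx
      have : ∫ w in (0:ℝ)..x, (φ' w * c w * Real.sqrt (c w ^ 2 + 0 / cos (φ w - ψ w) ^ 2))
          / (c w ^ 2 + 0) = ∫ w in (0:ℝ)..x, φ' w := by
        apply intervalIntegral.integral_congr
        intro w hw
        rw [uIcc_of_le hx.1] at hw
        have hcw := hcpos w ⟨hw.1, hw.2.trans hx.2⟩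
        simp only [zero_div, add_zero, Real.sqrt_sq hcw.le]
        field_simp
      rw [hφt, this, ftc2_aux hφd hφ' hx]; ring
    have hψ0 : ∀ x ∈ Icc 0 a, ψt 0 x = ψ x := by
      intro x hx
      have hcw := hcpos x hx
      have hC := hcos x hx
      have : c x * sin (φ x - ψ x) / Real.sqrt (c x ^ 2 * cos (φ x - ψ x) ^ 2 + 0)
          = tan (φ x - ψ x) := by
        rw [add_zero, ← mul_pow, Real.sqrt_sq (by positivity), tan_eq_sin_div_cos]
        field_simp
      rw [hψt, hφ0 x hx, hηt, this, arctan_tan (hηr x hx).1 (hηr x hx).2]; ring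
    have hz0 : zt 0 v = z v := by
      have : ∫ w in (0:ℝ)..v, Real.sqrt (z' w ^ 2 - 0 * f' w ^ 2)
          = ∫ w in (0:ℝ)..v, z' w := by
        apply intervalIntegral.integral_congr
        intro w hw
        rw [uIcc_of_le hv.1] at hw
        have hzw := hz'pos w ⟨hw.1, hw.2.trans hv.2⟩
        simp only [zero_mul, sub_zero, Real.sqrt_sq hzw.le]
      rw [hzt, this, ftc2_aux hzd hz' hv]; ring
    have hi1 : ∫ w in (0:ℝ)..u, -(g w * sin (ψt 0 w)) = ∫ w in (0:ℝ)..u, -(g w * sin (ψ w)) := by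
      apply intervalIntegral.integral_congr
      intro w hw
      rw [uIcc_of_le hu.1] at hw
      simp only [hψ0 w ⟨hw.1, hw.2.trans hu.2⟩]
    have hi2 : ∫ w in (0:ℝ)..u, g w * cos (ψt 0 w) = ∫ w in (0:ℝ)..u, g w * cos (ψ w) := by
      apply intervalIntegral.integral_congr
      intro w hw
      rw [uIcc_of_le hu.1] at hw
      simp only [hψ0 w ⟨hw.1, hw.2.trans hu.2⟩]
    rw [hσ, hi1, hi2, hz0, hφ0 u hu, add_zero, Real.sqrt_sq (hcpos u hu).le]
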